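/- Proposition 1: For every n ≥ 3 and every n-qubit density matrix ρ (pure or mixed), the sum of squared bipartite correlations over all pairs satisfies M(ρ) = Σ_{1≤k<l≤n} M_{kl}(ρ) ≤ C(n,2) = n(n-1)/2. -/

import Mathlib

noncomputable def pauli : ℕ → Matrix (Fin 2) (Fin 2) ℂ
  | 1 => !![0, 1; 1, 0]
  | 2 => !![0, -Complex.I; Complex.I, 0]
  | 3 => !![1, 0; 0, -1]
  | _ => 1

/-- The `ι`-fold Kronecker product of single-qubit operators `pauli (f k)`. -/
noncomputable def kronOp {ι : Type*} [Fintype ι] [DecidableEq ι] (f : ι → ℕ) :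
    Matrix (ι → Fin 2) (ι → Fin 2) ℂ :=
  Matrix.of fun x y => ∏ k, pauli (f k) (x k) (y k)

/-- Two-body correlation `T^{kl}_{ij}(ρ)`. -/
noncomputable def corr {ι : Type*} [Fintype ι] [DecidableEq ι]
    (ρ : Matrix (ι → Fin 2) (ι → Fin 2) ℂ) (k l : ι) (i j : ℕ) : ℝ :=
  ((ρ * kronOp (fun q => if q = k then i else if q = l then j else 0)).trace).re

/-- Single-qubit Bloch vector component `b^{(q)}_i(ρ)`. -/
noncomputable def bloch {ι : Type*} [Fintype ι] [DecidableEq ι]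
    (ρ : Matrix (ι → Fin 2) (ι → Fin 2) ℂ) (q : ι) (i : ℕ) : ℝ :=
  ((ρ * kronOp (fun p => if p = q then i else 0)).trace).re

/-- `M_{kl}(ρ)`. -/
noncomputable def Mkl {ι : Type*} [Fintype ι] [DecidableEq ι]
    (ρ : Matrix (ι → Fin 2) (ι → Fin 2) ℂ) (k l : ι) : ℝ :=
  ∑ i ∈ Finset.Icc 1 2, ∑ j ∈ Finset.Icc 1 2, (corr ρ k l i j) ^ 2

/-- `M(ρ) = Σ_{k<l} M_{kl}(ρ)`. -/
noncomputable def Mtot {ι : Type*} [Fintype ι] [LinearOrder ι]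
    (ρ : Matrix (ι → Fin 2) (ι → Fin 2) ℂ) : ℝ :=
  ∑ p ∈ Finset.univ.filter (fun p : ι × ι => p.1 < p.2), Mkl ρ p.1 p.2

/-- Density matrix of a pure state `ψ`: `ρ_ψ = ψ ψ†`. -/
noncomputable def pureDensity {ι : Type*} [Fintype ι] [DecidableEq ι]
    (ψ : (ι → Fin 2) → ℂ) : Matrix (ι → Fin 2) (ι → Fin 2) ℂ :=
  Matrix.of fun x y => ψ x * (starRingEnd ℂ) (ψ y)

/-- `ψ` is a unit vector. -/
def UnitVec {ι : Type*} [Fintype ι] [DecidableEq ι] (ψ : (ι → Fin 2) → ℂ) : Prop :=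
  ∑ x, Complex.normSq (ψ x) = 1

/-- Preferred-basis condition: all transverse Bloch components vanish. -/
def PreferredBasis {ι : Type*} [Fintype ι] [DecidableEq ι]
    (ρ : Matrix (ι → Fin 2) (ι → Fin 2) ℂ) : Prop :=
  ∀ q : ι, bloch ρ q 1 = 0 ∧ bloch ρ q 2 = 0

open scoped ComplexOrder

/-!
Two tensor products of Pauli matrices anticommute if their factors anticommute on one site and
commute on all others. For a linear combination `X = ∑ᵢ xᵢ Aᵢ` of pairwise anticommuting Hermitian
involutions the cross terms of `X²` cancel, so `X² = ∑ᵢ xᵢ²`; the Cauchy–Schwarz inequality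
`(tr ρX)² ≤ tr ρ * tr(ρX²)` with `xᵢ = tr ρAᵢ` then gives `∑ᵢ (tr ρAᵢ)² ≤ (tr ρ)²`.

Let `tr ρ = 1`. For distinct qubits `k, l, m`, the operators `σ₁ᵏσ₁ˡ, σ₁ᵏσ₂ˡ, σ₂ᵏσ₁ᵐ, σ₂ᵏσ₂ᵐ`
anticommute pairwise, and so do the four with `l` and `m` exchanged. The two bounds add up to the
monogamy relation `M_{kl} + M_{km} ≤ 2`. Averaging it over the pairs of partners of `k` bounds
`∑ₗ M_{kl}` by the number `n - 1` of partners, and the sum over `k` counts each pair `{k, l}` twice.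
-/

section Sums

lemma sum_mul_sum_self_of_anticommute {κ R : Type*} [NonUnitalNonAssocRing R] {s : Finset κ}
    {a : κ → R} (ha : (s : Set κ).Pairwise fun i j => a i * a j = -(a j * a i)) :
    (∑ i ∈ s, a i) * ∑ i ∈ s, a i = ∑ i ∈ s, a i * a i := by
  induction s using Finset.cons_induction with
  | empty => simp
  | cons i s hi ih =>
    have hcross : a i * ∑ j ∈ s, a j = -((∑ j ∈ s, a j) * a i) := by
      rw [Finset.mul_sum, Finset.sum_mul, ← Finset.sum_neg_distrib]
      exact Finset.sum_congr rfl fun j hj =>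
        ha (by simp) (by simp [hj]) (ne_of_mem_of_not_mem hj hi).symm
    have hs := ih (ha.mono (by simp))
    rw [Finset.sum_cons, Finset.sum_cons, add_mul, mul_add, mul_add, hs, hcross]
    abel

lemma sum_smul_mul_sum_smul_self_of_anticommute {κ K R : Type*} [CommSemiring K] [Ring R]
    [Algebra K R] {s : Finset κ} {a : κ → R} (hsq : ∀ i ∈ s, a i * a i = 1)
    (ha : (s : Set κ).Pairwise fun i j => a i * a j = -(a j * a i)) (x : κ → K) :
    (∑ i ∈ s, x i • a i) * ∑ i ∈ s, x i • a i = (∑ i ∈ s, x i ^ 2) • (1 : R) := by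
  have hanti : (s : Set κ).Pairwise fun i j =>
      (x i • a i) * (x j • a j) = -((x j • a j) * (x i • a i)) := fun i hi j hj hij => by
    simp only [smul_mul_smul_comm, ha hi hj hij, smul_neg, mul_comm (x i)]
  rw [sum_mul_sum_self_of_anticommute hanti, Finset.sum_smul]
  refine Finset.sum_congr rfl fun i hi => ?_
  rw [smul_mul_smul_comm, hsq i hi, sq]

lemma sum_le_card_mul_of_pairwise_add_le {α K : Type*} [Field K] [LinearOrder K]
    [IsStrictOrderedRing K] {s : Finset α} (hs : s.card ≠ 1) {f : α → K} {r : K}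
    (hf : (s : Set α).Pairwise fun a b => f a + f b ≤ 2 * r) :
    ∑ a ∈ s, f a ≤ s.card * r := by
  classical
  obtain rfl | hne := s.eq_empty_or_nonempty
  · simp
  have hcard : (2 : K) ≤ s.card := by
    exact_mod_cast (show 2 ≤ s.card by have := hne.card_pos; omega)
  have hrow : ∀ a ∈ s, (s.card - 2) * f a + ∑ b ∈ s, f b ≤ (s.card - 1) * (2 * r) := by
    intro a ha
    calc (s.card - 2) * f a + ∑ b ∈ s, f b = ∑ b ∈ s.erase a, (f a + f b) := by
          rw [← Finset.add_sum_erase s f ha, Finset.sum_add_distrib, Finset.sum_const,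
            nsmul_eq_mul, Finset.cast_card_erase_of_mem ha]
          ring
      _ ≤ ∑ b ∈ s.erase a, 2 * r := Finset.sum_le_sum fun b hb =>
          hf ha (Finset.mem_of_mem_erase hb) (Finset.ne_of_mem_erase hb).symm
      _ = (s.card - 1) * (2 * r) := by
          rw [Finset.sum_const, nsmul_eq_mul, Finset.cast_card_erase_of_mem ha]
  have htotal := Finset.sum_le_sum hrow
  rw [Finset.sum_add_distrib, ← Finset.mul_sum, Finset.sum_const, Finset.sum_const, nsmul_eq_mul,
    nsmul_eq_mul] at htotal
  refine le_of_mul_le_mul_left ?_ (show (0 : K) < 2 * (s.card - 1) by linarith)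
  linarith

lemma sum_sum_erase_eq_two_nsmul_sum_lt {α M : Type*} [Fintype α] [LinearOrder α]
    [AddCommMonoid M] {f : α → α → M} (hf : ∀ a b, a ≠ b → f a b = f b a) :
    ∑ a, ∑ b ∈ Finset.univ.erase a, f a b =
      2 • ∑ p ∈ Finset.univ.filter (fun p : α × α => p.1 < p.2), f p.1 p.2 := by
  have hswap : ∑ p ∈ Finset.univ.filter (fun p : α × α => p.2 < p.1), f p.1 p.2 =
      ∑ p ∈ Finset.univ.filter (fun p : α × α => p.1 < p.2), f p.1 p.2 :=
    Finset.sum_equiv (Equiv.prodComm α α) (by simp) fun p hp =>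
      hf p.1 p.2 (Finset.mem_filter.1 hp).2.ne'
  rw [two_nsmul]
  nth_rewrite 2 [← hswap]
  simp only [Finset.sum_filter, Fintype.sum_prod_type, ← Finset.sum_add_distrib,
    ← Finset.filter_ne']
  refine Finset.sum_congr rfl fun a _ => Finset.sum_congr rfl fun b _ => ?_
  obtain h | rfl | h := lt_trichotomy a b
  · simp [h, h.ne', h.not_gt]
  · simp
  · simp [h, h.ne, h.not_gt]

end Sums

section TraceInequalities

variable {m 𝕜 : Type*} [Fintype m] [RCLike 𝕜] {ρ : Matrix m m 𝕜}

lemma sq_re_trace_mul_le (hρ : ρ.PosSemidef) {A : Matrix m m 𝕜} (hA : A.IsHermitian) :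
    RCLike.re (ρ * A).trace ^ 2 ≤ RCLike.re ρ.trace * RCLike.re (ρ * (A * A)).trace := by
  classical
  let := ρ.toMatrixSeminormedAddCommGroup hρ
  let := ρ.toMatrixInnerProductSpace hρ
  have inner_eq (X Y : Matrix m m 𝕜) : inner 𝕜 X Y = (Y * ρ * X.conjTranspose).trace := rfl
  have hAA : (ρ * (A * A)).trace = (A * ρ * A).trace := by
    rw [← mul_assoc, Matrix.trace_mul_comm, mul_assoc]
  have hcs := inner_mul_inner_self_le (𝕜 := 𝕜) A 1
  rw [norm_inner_symm 1 A, ← sq] at hcs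
  simp only [inner_eq, hA.eq, Matrix.conjTranspose_one, one_mul, mul_one, ← hAA] at hcs
  rw [mul_comm]
  exact (sq_le_sq' (abs_le.1 (RCLike.abs_re_le_norm _)).1 (RCLike.re_le_norm _)).trans hcs

lemma sum_sq_re_trace_mul_le_of_anticommute [DecidableEq m] (hρ : ρ.PosSemidef) {κ : Type*}
    {s : Finset κ} {A : κ → Matrix m m 𝕜} (hherm : ∀ i ∈ s, (A i).IsHermitian)
    (hsq : ∀ i ∈ s, A i * A i = 1)
    (hanti : (s : Set κ).Pairwise fun i j => A i * A j = -(A j * A i)) :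
    ∑ i ∈ s, RCLike.re (ρ * A i).trace ^ 2 ≤ RCLike.re ρ.trace ^ 2 := by
  set x : κ → ℝ := fun i => RCLike.re (ρ * A i).trace
  set X : Matrix m m 𝕜 := ∑ i ∈ s, (x i : 𝕜) • A i with hX
  set S : ℝ := ∑ i ∈ s, x i ^ 2 with hS
  have hXherm : X.IsHermitian := by
    rw [Matrix.IsHermitian, hX, Matrix.conjTranspose_sum]
    refine Finset.sum_congr rfl fun i hi => ?_
    rw [Matrix.conjTranspose_smul, (hherm i hi).eq, RCLike.star_def, RCLike.conj_ofReal]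
  have hXX : X * X = (S : 𝕜) • (1 : Matrix m m 𝕜) := by
    rw [hX, sum_smul_mul_sum_smul_self_of_anticommute hsq hanti, hS]
    push_cast
    rfl
  have htrX : RCLike.re (ρ * X).trace = S := by
    simp only [hX, Finset.mul_sum, mul_smul_comm, Matrix.trace_sum, Matrix.trace_smul,
      smul_eq_mul, map_sum, RCLike.re_ofReal_mul, hS, sq, x]
  have hcs := sq_re_trace_mul_le hρ hXherm
  rw [htrX, hXX, mul_smul_comm, mul_one, Matrix.trace_smul, smul_eq_mul,
    RCLike.re_ofReal_mul] at hcs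
  have hS_nonneg : 0 ≤ S := Finset.sum_nonneg fun i _ => sq_nonneg (x i)
  obtain hS_zero | hS_pos := hS_nonneg.eq_or_lt
  · rw [← hS_zero]
    exact sq_nonneg _
  · exact le_of_mul_le_mul_left (by linarith) hS_pos

end TraceInequalities

section PiKronecker

variable {ι R : Type*} [Fintype ι]

/-- The Kronecker product `⨂ₖ A k` of a finite family of matrices, with rows and columns indexed by
dependent functions, as are the basis states of a multipartite system. -/
def piKronecker [CommMonoid R] {l m : ι → Type*} (A : ∀ k, Matrix (l k) (m k) R) :
    Matrix (∀ k, l k) (∀ k, m k) R :=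
  Matrix.of fun x y => ∏ k, A k (x k) (y k)

lemma piKronecker_mul [DecidableEq ι] [CommSemiring R] {l m n : ι → Type*} [∀ k, Fintype (m k)]
    (A : ∀ k, Matrix (l k) (m k) R) (B : ∀ k, Matrix (m k) (n k) R) :
    piKronecker A * piKronecker B = piKronecker fun k => A k * B k := by
  ext x y
  simp only [piKronecker, Matrix.mul_apply, Matrix.of_apply, ← Finset.prod_mul_distrib,
    Fintype.prod_sum]

lemma piKronecker_one [CommSemiring R] {m : ι → Type*} [∀ k, DecidableEq (m k)] :
    piKronecker (fun k => (1 : Matrix (m k) (m k) R)) = 1 := by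
  ext x y
  simp [piKronecker, Matrix.one_apply, Fintype.prod_ite_zero, funext_iff]

lemma conjTranspose_piKronecker [CommSemiring R] [StarRing R] {l m : ι → Type*}
    (A : ∀ k, Matrix (l k) (m k) R) :
    (piKronecker A).conjTranspose = piKronecker fun k => (A k).conjTranspose := by
  ext x y
  simp [piKronecker, Matrix.conjTranspose_apply]

lemma piKronecker_eq_neg [CommRing R] {l m : ι → Type*} {A B : ∀ k, Matrix (l k) (m k) R}
    {q : ι} (hq : A q = -B q) (h : ∀ k ≠ q, A k = B k) : piKronecker A = -piKronecker B := by
  classical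
  ext x y
  simp only [piKronecker, Matrix.of_apply, Matrix.neg_apply,
    ← Finset.mul_prod_erase _ _ (Finset.mem_univ q), hq, neg_mul]
  rw [Finset.prod_congr rfl fun k hk => by rw [h k (Finset.ne_of_mem_erase hk)]]

lemma piKronecker_anticommute [DecidableEq ι] [CommRing R] {m : ι → Type*} [∀ k, Fintype (m k)]
    {A B : ∀ k, Matrix (m k) (m k) R} {q : ι} (hq : A q * B q = -(B q * A q))
    (h : ∀ k ≠ q, Commute (A k) (B k)) :
    piKronecker A * piKronecker B = -(piKronecker B * piKronecker A) := by
  rw [piKronecker_mul, piKronecker_mul]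
  exact piKronecker_eq_neg hq fun k hk => (h k hk).eq

end PiKronecker

section Pauli

lemma pauli_zero : pauli 0 = 1 := rfl

lemma pauli_mul_self (i : ℕ) : pauli i * pauli i = 1 := by
  unfold pauli
  split <;> simp [Matrix.one_fin_two]

lemma isHermitian_pauli (i : ℕ) : (pauli i).IsHermitian := by
  unfold pauli
  split <;> ext a b <;> fin_cases a <;> fin_cases b <;> simp

lemma pauli_anticommute {i j : ℕ} (hi : i ∈ Finset.Icc 1 3) (hj : j ∈ Finset.Icc 1 3)
    (hij : i ≠ j) : pauli i * pauli j = -(pauli j * pauli i) := by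
  fin_cases hi <;> fin_cases hj <;> first | contradiction | simp [pauli]

end Pauli

section PauliPair

variable {ι : Type*} [Fintype ι] [DecidableEq ι]

/-- The two-body observable with `σᵢ` on site `k` and `σⱼ` on site `l`, whose expectation value is
`corr ρ k l i j`. If `k = l`, the site carries `σᵢ`, as in `corr`. -/
noncomputable def pauliPair (k l : ι) (i j : ℕ) : Matrix (ι → Fin 2) (ι → Fin 2) ℂ :=
  piKronecker fun q => pauli (if q = k then i else if q = l then j else 0)

lemma corr_eq_re_trace_mul_pauliPair (ρ : Matrix (ι → Fin 2) (ι → Fin 2) ℂ) (k l : ι) (i j : ℕ) :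
    corr ρ k l i j = (ρ * pauliPair k l i j).trace.re := rfl

lemma isHermitian_pauliPair (k l : ι) (i j : ℕ) : (pauliPair k l i j).IsHermitian := by
  rw [Matrix.IsHermitian, pauliPair, conjTranspose_piKronecker]
  simp only [(isHermitian_pauli _).eq]

lemma pauliPair_mul_self (k l : ι) (i j : ℕ) : pauliPair k l i j * pauliPair k l i j = 1 := by
  simp only [pauliPair, piKronecker_mul, pauli_mul_self, piKronecker_one]

lemma pauliPair_comm {k l : ι} (hkl : k ≠ l) (i j : ℕ) :
    pauliPair k l i j = pauliPair l k j i := by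
  unfold pauliPair
  congr! 3 with q
  grind

lemma pauliPair_anticommute_of_ne {k l m : ι} (hlk : l ≠ k) (hlm : l ≠ m) {i i' : ℕ}
    (hi : pauli i * pauli i' = -(pauli i' * pauli i)) (j j' : ℕ) :
    pauliPair k l i j * pauliPair k m i' j' = -(pauliPair k m i' j' * pauliPair k l i j) := by
  refine piKronecker_anticommute (q := k) (by simpa using hi) fun q hq => ?_
  by_cases hql : q = l
  · simp [hql, hlk, hlm, pauli_zero]
  · simp [hql, hq, pauli_zero]

lemma pauliPair_anticommute_of_eq {k l : ι} (hlk : l ≠ k) (i : ℕ) {j j' : ℕ}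
    (hj : pauli j * pauli j' = -(pauli j' * pauli j)) :
    pauliPair k l i j * pauliPair k l i j' = -(pauliPair k l i j' * pauliPair k l i j) := by
  refine piKronecker_anticommute (q := l) (by simpa [hlk] using hj) fun q hq => ?_
  simp [hq]

lemma pairwise_pauliPair_anticommute {s t : Finset ℕ} (hs : s ⊆ Finset.Icc 1 3)
    (ht : t ⊆ Finset.Icc 1 3) {k : ι} {l : ℕ → ι} (hl : Set.InjOn l s) (hlk : ∀ i ∈ s, l i ≠ k) :
    ((s ×ˢ t : Finset (ℕ × ℕ)) : Set (ℕ × ℕ)).Pairwise fun p q =>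
      pauliPair k (l p.1) p.1 p.2 * pauliPair k (l q.1) q.1 q.2 =
        -(pauliPair k (l q.1) q.1 q.2 * pauliPair k (l p.1) p.1 p.2) := by
  rintro ⟨i, j⟩ hij ⟨i', j'⟩ hij' hne
  simp only [Finset.mem_coe, Finset.mem_product] at hij hij'
  obtain rfl | hii' := eq_or_ne i i'
  · have hjj' : j ≠ j' := fun h => hne (by rw [h])
    exact pauliPair_anticommute_of_eq (hlk i hij.1) i
      (pauli_anticommute (ht hij.2) (ht hij'.2) hjj')
  · exact pauliPair_anticommute_of_ne (hlk i hij.1) (hl.ne hij.1 hij'.1 hii')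
      (pauli_anticommute (hs hij.1) (hs hij'.1) hii') j j'

end PauliPair

section Monogamy

variable {ι : Type*} [Fintype ι] {ρ : Matrix (ι → Fin 2) (ι → Fin 2) ℂ}

lemma corr_comm [DecidableEq ι] (ρ : Matrix (ι → Fin 2) (ι → Fin 2) ℂ) {k l : ι} (hkl : k ≠ l)
    (i j : ℕ) : corr ρ k l i j = corr ρ l k j i := by
  simp only [corr_eq_re_trace_mul_pauliPair, pauliPair_comm hkl]

lemma Mkl_comm [DecidableEq ι] (ρ : Matrix (ι → Fin 2) (ι → Fin 2) ℂ) {k l : ι} (hkl : k ≠ l) :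
    Mkl ρ k l = Mkl ρ l k := by
  simp only [Mkl, corr_comm ρ hkl]
  exact Finset.sum_comm

lemma sum_sq_corr_le [DecidableEq ι] (hρ : ρ.PosSemidef) {s t : Finset ℕ}
    (hs : s ⊆ Finset.Icc 1 3) (ht : t ⊆ Finset.Icc 1 3) {k : ι} {l : ℕ → ι}
    (hl : Set.InjOn l s) (hlk : ∀ i ∈ s, l i ≠ k) :
    ∑ i ∈ s, ∑ j ∈ t, corr ρ k (l i) i j ^ 2 ≤ ρ.trace.re ^ 2 := by
  have hsum := sum_sq_re_trace_mul_le_of_anticommute hρ (fun _ _ => isHermitian_pauliPair ..)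
    (fun _ _ => pauliPair_mul_self ..) (pairwise_pauliPair_anticommute hs ht hl hlk)
  simpa only [Finset.sum_product, RCLike.re_to_complex, ← corr_eq_re_trace_mul_pauliPair]
    using hsum

lemma Mkl_add_Mkl_le [DecidableEq ι] (hρ : ρ.PosSemidef) {k l m : ι} (hlk : l ≠ k) (hmk : m ≠ k)
    (hlm : l ≠ m) : Mkl ρ k l + Mkl ρ k m ≤ 2 * ρ.trace.re ^ 2 := by
  have hsub : Finset.Icc 1 2 ⊆ Finset.Icc 1 3 := Finset.Icc_subset_Icc_right (by norm_num)
  have hicc : Finset.Icc 1 2 = ({1, 2} : Finset ℕ) := rfl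
  have hcross {l m : ι} (hlk : l ≠ k) (hmk : m ≠ k) (hlm : l ≠ m) :
      ∑ j ∈ Finset.Icc 1 2, corr ρ k l 1 j ^ 2 + ∑ j ∈ Finset.Icc 1 2, corr ρ k m 2 j ^ 2 ≤
        ρ.trace.re ^ 2 := by
    have h := sum_sq_corr_le hρ hsub hsub (k := k) (l := fun i => if i = 1 then l else m)
      (by simp [hicc, Set.InjOn, hlm, hlm.symm]) (by simp [hicc, hlk, hmk])
    simpa [hicc] using h
  have hMkl (l : ι) : Mkl ρ k l =
      ∑ j ∈ Finset.Icc 1 2, corr ρ k l 1 j ^ 2 + ∑ j ∈ Finset.Icc 1 2, corr ρ k l 2 j ^ 2 := by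
    rw [Mkl, hicc, Finset.sum_pair (by norm_num)]
  rw [hMkl, hMkl]
  linarith [hcross hlk hmk hlm, hcross hmk hlk hlm.symm]

lemma sum_Mkl_erase_le [DecidableEq ι] (hι : Fintype.card ι ≠ 2) (hρ : ρ.PosSemidef) (k : ι) :
    ∑ l ∈ Finset.univ.erase k, Mkl ρ k l ≤ (Fintype.card ι - 1) * ρ.trace.re ^ 2 := by
  have hcard : (Finset.univ.erase k).card ≠ 1 := by
    rw [Finset.card_erase_of_mem (Finset.mem_univ k), Finset.card_univ]
    omega
  refine (sum_le_card_mul_of_pairwise_add_le hcard fun l hl m hm hlm =>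
    Mkl_add_Mkl_le hρ (Finset.ne_of_mem_erase hl) (Finset.ne_of_mem_erase hm) hlm).trans_eq ?_
  rw [Finset.cast_card_erase_of_mem (Finset.mem_univ k), Finset.card_univ]

theorem Mtot_le_choose_general [LinearOrder ι] (hι : Fintype.card ι ≠ 2) (hρ : ρ.PosSemidef) :
    Mtot ρ ≤ (Fintype.card ι).choose 2 * ρ.trace.re ^ 2 := by
  have hdouble : 2 * Mtot ρ ≤ Fintype.card ι * ((Fintype.card ι - 1) * ρ.trace.re ^ 2) := by
    calc 2 * Mtot ρ = ∑ k, ∑ l ∈ Finset.univ.erase k, Mkl ρ k l := by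
          rw [sum_sum_erase_eq_two_nsmul_sum_lt fun k l => Mkl_comm ρ, nsmul_eq_mul, Nat.cast_two,
            Mtot]
      _ ≤ ∑ _k : ι, (Fintype.card ι - 1) * ρ.trace.re ^ 2 :=
          Finset.sum_le_sum fun k _ => sum_Mkl_erase_le hι hρ k
      _ = Fintype.card ι * ((Fintype.card ι - 1) * ρ.trace.re ^ 2) := by
          rw [Finset.sum_const, Finset.card_univ, nsmul_eq_mul]
  rw [Nat.cast_choose_two]
  linarith

end Monogamy

/-- Proposition 1: for any `n`-qubit density matrix (`n ≥ 3`),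
`M(ρ) = Σ_{k<l} M_{kl}(ρ) ≤ C(n,2)`. -/
theorem Mtot_le_choose (n : ℕ) (hn : 3 ≤ n)
    (ρ : Matrix (Fin n → Fin 2) (Fin n → Fin 2) ℂ)
    (hρ : ρ.PosSemidef) (hTr : ρ.trace = 1) :
    Mtot ρ ≤ (n.choose 2 : ℝ) := by
  simpa [hTr] using Mtot_le_choose_general (by rw [Fintype.card_fin]; omega) hρ
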